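/- Let p be a prime, let B be a perfect F_p-algebra that is an integral domain, and let K be the fraction field of B. Then the p-adic completion of the localization W(B)_{(p)} of W(B) at the prime ideal (p) is isomorphic, as a ring, to the ring of p-typical Witt vectors W(K). -/

import Mathlib

theorem aux_completion {R S : Type*} [CommRing R] [CommRing S] (I : Ideal R) (J : Ideal S)
    [IsAdicComplete J S] (f : R →+* S)
    (hf : ∀ n x, f x ∈ J ^ n ↔ x ∈ I ^ n)
    (hs : ∀ n y, ∃ x, f x - y ∈ J ^ n) :
    Nonempty (AdicCompletion I R ≃+* S) := by
  have hle : ∀ n, I ^ n ≤ (J ^ n).comap f := fun n x hx => (hf n x).2 hx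
  let q : (n : ℕ) → R ⧸ I ^ n →+* S ⧸ J ^ n := fun n => Ideal.quotientMap (J ^ n) f (hle n)
  have hq : ∀ n, Function.Injective (q n) := fun n =>
    Ideal.quotientMap_injective' (fun x hx => (hf n x).1 hx)
  let F : (n : ℕ) → AdicCompletion I R →+* S ⧸ J ^ n := fun n =>
    (q n).comp (AdicCompletion.evalₐ I n : AdicCompletion I R →+* R ⧸ I ^ n)
  have hFmk : ∀ n (x : AdicCompletion.AdicCauchySequence I R),
      F n (AdicCompletion.mk I R x) = Ideal.Quotient.mk (J ^ n) (f (x.val n)) := by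
    intro n x
    simp [F, q]
  have hF : ∀ {m n : ℕ} (h : m ≤ n), (Ideal.Quotient.factorPow J h).comp (F n) = F m := by
    intro m n h
    ext x
    induction x using AdicCompletion.induction_on with
    | h x =>
      rw [RingHom.comp_apply, hFmk, hFmk]
      change Ideal.Quotient.mk (J ^ m) _ = _
      rw [Ideal.Quotient.eq, ← map_sub, hf]
      have := x.2 h
      rw [SModEq.sub_mem] at this
      rw [← neg_mem_iff, neg_sub]
      simpa using this
  let g := IsAdicComplete.liftRingHom J F hF
  have hg : ∀ n x, Ideal.Quotient.mk (J ^ n) (g x) = F n x := fun n x =>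
    IsAdicComplete.mk_liftRingHom J F hF n x
  refine ⟨RingEquiv.ofBijective g ⟨?_, ?_⟩⟩
  · intro x y hxy
    apply AdicCompletion.ext_evalₐ
    intro n
    apply hq n
    have h1 := hg n x
    have h2 := hg n y
    rw [hxy, h2] at h1
    exact h1.symm
  · intro y
    choose u hu using fun n => hs n y
    have hc : ∀ n, u n ≡ u (n + 1) [SMOD (I ^ n • ⊤ : Submodule R R)] := by
      intro n
      rw [SModEq.sub_mem]
      simp only [smul_eq_mul, Ideal.mul_top]
      rw [← hf, map_sub]
      have := sub_mem (hu n) (Ideal.pow_le_pow_right (Nat.le_succ n) (hu (n + 1)))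
      simpa using this
    refine ⟨AdicCompletion.mk I R (AdicCompletion.AdicCauchySequence.mk I R u hc), ?_⟩
    rw [← sub_eq_zero]
    apply IsHausdorff.haus (I := J) inferInstance
    intro n
    rw [SModEq.zero]
    simp only [smul_eq_mul, Ideal.mul_top]
    rw [← Ideal.Quotient.eq, hg, hFmk, Ideal.Quotient.eq]
    exact hu n

theorem aux_perfect (p : ℕ) [Fact p.Prime] (B : Type*) [CommRing B] [IsDomain B]
    [CharP B p] [PerfectRing B p] [CharP (FractionRing B) p] :
    PerfectRing (FractionRing B) p := by
  apply PerfectRing.ofSurjective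
  intro x
  obtain ⟨a, b, hb, rfl⟩ := IsFractionRing.div_surjective (A := B) x
  obtain ⟨a, rfl⟩ := (bijective_frobenius B p).2 a
  obtain ⟨b, rfl⟩ := (bijective_frobenius B p).2 b
  exact ⟨algebraMap B _ a / algebraMap B _ b, by simp [frobenius_def]⟩

/-- For a perfect `𝔽_p`-domain `B` with fraction field `K`, the `p`-adic
completion of the localization of `𝕎 B` at the prime ideal `(p)` is isomorphic to `𝕎 K`. -/
theorem adic_completion_of_localization_iso_witt_of_fraction_field
    (p : ℕ) [Fact p.Prime] (B : Type*) [CommRing B] [IsDomain B]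
    [CharP B p] [PerfectRing B p] :
    (Ideal.span {(p : WittVector p B)}).IsPrime ∧
    ∀ [hP : (Ideal.span {(p : WittVector p B)}).IsPrime],
      Nonempty
        (AdicCompletion
            (Ideal.span
              {(p : Localization.AtPrime (Ideal.span {(p : WittVector p B)}))})
            (Localization.AtPrime (Ideal.span {(p : WittVector p B)})) ≃+*
          WittVector p (FractionRing B)) := by
  refine ⟨?_, ?_⟩
  · rw [← WittVector.ker_constantCoeff]
    exact RingHom.ker_isPrime _
  intro hP
  haveI : CharP (FractionRing B) p :=
    charP_of_injective_algebraMap (IsFractionRing.injective B (FractionRing B)) p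
  haveI := aux_perfect p B
  have hinj := IsFractionRing.injective B (FractionRing B)
  let K := FractionRing B
  let P := Ideal.span {(p : WittVector p B)}
  let L := Localization.AtPrime P
  let m : WittVector p B →+* WittVector p K := WittVector.map (algebraMap B K)
  have hu : ∀ y : P.primeCompl, IsUnit (m y) := by
    intro y
    apply WittVector.isUnit_of_coeff_zero_ne_zero
    have h := y.2
    rw [WittVector.map_coeff]
    intro h0
    apply h
    change _ ∈ Ideal.span _
    rw [WittVector.mem_span_p_iff_coeff_zero_eq_zero]
    exact hinj (by simpa using h0)
  let f : L →+* WittVector p K := IsLocalization.lift hu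
  have hfm : ∀ a, f (algebraMap _ L a) = m a := fun a => IsLocalization.lift_eq hu a
  refine aux_completion _ (Ideal.span {(p : WittVector p K)}) f ?_ ?_
  · intro n x
    obtain ⟨a, s, rfl⟩ := IsLocalization.exists_mk'_eq P.primeCompl x
    have hsL : IsUnit (algebraMap (WittVector p B) L s) := IsLocalization.map_units L s
    rw [Ideal.span_singleton_pow, Ideal.span_singleton_pow]
    constructor
    · intro h
      have h1 : m a ∈ Ideal.span {(p : WittVector p K) ^ n} := by
        have := Ideal.mul_mem_right (m s) _ h
        rwa [← hfm s, ← map_mul, IsLocalization.mk'_spec, hfm] at this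
      have h2 : a ∈ Ideal.span {(p : WittVector p B) ^ n} := by
        rw [WittVector.mem_span_p_pow_iff_le_coeff_eq_zero] at h1 ⊢
        intro k hk
        apply hinj
        rw [map_zero, ← h1 k hk, WittVector.map_coeff]
      rw [Ideal.mem_span_singleton] at h2 ⊢
      have h3 := map_dvd (algebraMap (WittVector p B) L) h2
      rw [← IsLocalization.mk'_spec L a s, map_pow, map_natCast] at h3
      exact (hsL.dvd_mul_right).1 h3
    · intro h
      rw [Ideal.mem_span_singleton] at h ⊢
      simpa using map_dvd f h
  · have step : ∀ y : WittVector p K, ∃ x, f x - y ∈ Ideal.span {(p : WittVector p K)} := by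
      intro y
      obtain ⟨a, b, hb, hab⟩ := IsFractionRing.div_surjective (A := B) (y.coeff 0)
      have hb0 : b ≠ 0 := nonZeroDivisors.ne_zero hb
      have hbP : WittVector.teichmuller p b ∈ P.primeCompl := by
        intro h
        change _ ∈ Ideal.span _ at h
        rw [WittVector.mem_span_p_iff_coeff_zero_eq_zero, WittVector.teichmuller_coeff_zero] at h
        exact hb0 h
      refine ⟨IsLocalization.mk' L (WittVector.teichmuller p a) ⟨_, hbP⟩, ?_⟩
      set x : L := IsLocalization.mk' L (WittVector.teichmuller p a) ⟨_, hbP⟩ with hx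
      have h1 : f x * m (WittVector.teichmuller p b) = m (WittVector.teichmuller p a) := by
        rw [← hfm, ← hfm, ← map_mul]
        congr 1
        exact IsLocalization.mk'_spec L (WittVector.teichmuller p a) ⟨_, hbP⟩
      have h2 := congrArg WittVector.constantCoeff h1
      rw [map_mul] at h2
      simp only [WittVector.constantCoeff_apply, m, WittVector.map_coeff,
        WittVector.teichmuller_coeff_zero] at h2
      rw [WittVector.mem_span_p_iff_coeff_zero_eq_zero, ← WittVector.constantCoeff_apply, map_sub,
        WittVector.constantCoeff_apply, WittVector.constantCoeff_apply, sub_eq_zero, ← hab,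
        eq_div_iff]
      · exact h2
      · intro h
        exact hb0 (hinj (by simpa using h))
    intro n
    induction n with
    | zero => intro y; exact ⟨0, by simp⟩
    | succ n ih =>
      intro y
      obtain ⟨x, hx⟩ := step y
      obtain ⟨z, hz⟩ := Ideal.mem_span_singleton'.1 hx
      obtain ⟨w, hw⟩ := ih z
      refine ⟨x - w * p, ?_⟩
      have : f (x - w * p) - y = -((f w - z) * p) := by
        rw [map_sub, map_mul, map_natCast]
        linear_combination -hz
      rw [this, neg_mem_iff, pow_succ]
      exact Ideal.mul_mem_mul hw (Ideal.mem_span_singleton_self _)
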